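/- Every subgroup of order 12 of SL(2, Z/7Z) that contains -I and the order-3 matrix φ = [[0,-1],[1,-1]] and is nonabelian is isomorphic to the dicyclic group Dic3 of order 12 (and not to the dihedral group D12). -/

import Mathlib

namespace QuaternionGroup

variable {G : Type*} [Group G]

/-- The homomorphism out of a quaternion group given by two elements satisfying the defining
relations of its presentation. -/
noncomputable def liftOfRelations {n : ℕ} {g x : G} (hg : g ^ (2 * n) = 1) (hx : x * x = g ^ n)
    (hconj : SemiconjBy x g g⁻¹) : QuaternionGroup n →* G :=
  let p : ZMod (2 * n) →+ Additive G :=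
    ZMod.lift (2 * n) ⟨zmultiplesHom (Additive G) (Additive.ofMul g), by
      rw [zmultiplesHom_apply, ← ofMul_zpow, zpow_natCast, hg, ofMul_one]⟩
  have hp (k : ℤ) : (p k).toMul = g ^ k := by
    simp [p]
  have hswap (k : ℤ) : g ^ k * x = x * g ^ (-k) := by
    simpa using (hconj.zpow_right (-k)).eq.symm
  MonoidHom.mk'
    (fun
      | a i => (p i).toMul
      | xa i => x * (p i).toMul) <| by
    rintro (i | i) (j | j) <;> obtain ⟨i, rfl⟩ := ZMod.intCast_surjective i <;>
      obtain ⟨j, rfl⟩ := ZMod.intCast_surjective j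
    · simp [hp]
    · simp only [a_mul_xa, ← Int.cast_sub, hp]
      rw [← mul_assoc, hswap, mul_assoc, ← zpow_add, neg_add_eq_sub]
    · simp [hp, mul_assoc]
    · simp only [xa_mul_xa]
      rw [← Int.cast_natCast, ← Int.cast_add, ← Int.cast_sub, hp, hp, hp, mul_assoc,
        ← mul_assoc (g ^ i), hswap, mul_assoc, ← mul_assoc x, hx, ← zpow_natCast, ← zpow_add,
        ← zpow_add]
      congr 1
      ring

theorem liftOfRelations_a_intCast {n : ℕ} {g x : G} (hg : g ^ (2 * n) = 1) (hx : x * x = g ^ n)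
    (hconj : SemiconjBy x g g⁻¹) (k : ℤ) : liftOfRelations hg hx hconj (a k) = g ^ k := by
  simp [liftOfRelations]

theorem liftOfRelations_xa_intCast {n : ℕ} {g x : G} (hg : g ^ (2 * n) = 1) (hx : x * x = g ^ n)
    (hconj : SemiconjBy x g g⁻¹) (k : ℤ) : liftOfRelations hg hx hconj (xa k) = x * g ^ k := by
  simp [liftOfRelations]

theorem liftOfRelations_injective {n : ℕ} {g x : G} (hg : orderOf g = 2 * n) (hx : x * x = g ^ n)
    (hconj : SemiconjBy x g g⁻¹) (hxg : x ∉ Subgroup.zpowers g) :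
    Function.Injective (liftOfRelations (hg ▸ pow_orderOf_eq_one g) hx hconj) := by
  rw [injective_iff_map_eq_one]
  rintro (i | i) h <;> obtain ⟨i, rfl⟩ := ZMod.intCast_surjective i
  · rw [liftOfRelations_a_intCast, ← orderOf_dvd_iff_zpow_eq_one, hg,
      ← ZMod.intCast_zmod_eq_zero_iff_dvd] at h
    rw [h, a_zero]
  · rw [liftOfRelations_xa_intCast, mul_eq_one_iff_eq_inv] at h
    exact absurd (h ▸ inv_mem (Subgroup.zpow_mem_zpowers g i)) hxg

end QuaternionGroup

/-- A nonabelian group of order `12` with an element of order `6` and only one involution is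
dicyclic. -/
theorem nonempty_mulEquiv_quaternionGroup_three {G : Type*} [Group G] (hcard : Nat.card G = 12)
    (hnab : ¬ ∀ a b : G, a * b = b * a) {g : G} (hg : orderOf g = 6)
    (hinv : ∀ h : G, h * h = 1 → h = 1 ∨ h = g ^ 3) :
    Nonempty (G ≃* QuaternionGroup 3) := by
  have : Finite G := Nat.finite_of_card_ne_zero (by omega)
  have hindex : (Subgroup.zpowers g).index = 2 := by
    have := (Subgroup.zpowers g).card_mul_index
    rw [Nat.card_zpowers, hg, hcard] at this
    omega
  have hnormal := Subgroup.normal_of_index_eq_two hindex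
  obtain ⟨x, hx⟩ : ∃ x, x ∉ Subgroup.zpowers g := by
    by_contra! h
    refine hnab fun a b => ?_
    obtain ⟨i, rfl⟩ := h a
    obtain ⟨j, rfl⟩ := h b
    exact zpow_mul_comm g i j
  have hncomm : ¬ Commute x g := by
    intro hc
    have hpow (k : ℤ) : Commute x (g ^ k) := hc.zpow_right k
    have hform (a : G) : ∃ k : ℤ, a = g ^ k ∨ a = x * g ^ k := by
      by_cases ha : a ∈ Subgroup.zpowers g
      · obtain ⟨k, rfl⟩ := ha
        exact ⟨k, .inl rfl⟩
      · obtain ⟨k, hk⟩ : x⁻¹ * a ∈ Subgroup.zpowers g := by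
          rw [Subgroup.mul_mem_iff_of_index_two hindex, inv_mem_iff]
          tauto
        exact ⟨k, .inr (by simp only at hk; simp [hk])⟩
    refine hnab fun a b => ?_
    have hgg (i j : ℤ) : Commute (g ^ i) (g ^ j) := zpow_mul_comm g i j
    obtain ⟨i, rfl | rfl⟩ := hform a <;> obtain ⟨j, rfl | rfl⟩ := hform b
    · exact hgg i j
    · exact (hpow i).symm.mul_right (hgg i j)
    · exact (hpow j).mul_left (hgg i j)
    · exact ((Commute.refl x).mul_right (hpow j)).mul_left ((hpow i).symm.mul_right (hgg i j))
  have hconj : SemiconjBy x g g⁻¹ := by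
    obtain ⟨k, hk6, hk⟩ : ∃ k < 6, g ^ k = x * g * x⁻¹ := by
      have := hnormal.conj_mem g (Subgroup.mem_zpowers g) x
      classical rw [mem_zpowers_iff_mem_range_orderOf, hg] at this
      simpa using this
    have horder : orderOf (g ^ k) = 6 := by
      rw [hk, ← hg, ← MulAut.conj_apply, MulEquiv.orderOf_eq]
    rw [orderOf_pow, hg] at horder
    have hg5 : g ^ 5 = g⁻¹ := by
      rw [eq_inv_iff_mul_eq_one, ← pow_succ]
      exact orderOf_dvd_iff_pow_eq_one.1 hg.dvd
    rw [SemiconjBy, ← mul_inv_eq_iff_eq_mul, ← hk]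
    interval_cases k <;> norm_num at horder
    · exact absurd (by rw [pow_one, eq_mul_inv_iff_mul_eq] at hk; exact hk.symm) hncomm
    · exact hg5
  have hsq : x * x = g ^ 3 := by
    obtain ⟨k, hk⟩ := Subgroup.mul_self_mem_of_index_two hindex x
    simp only at hk
    have h1 : x * (x * x) = (x * x)⁻¹ * x := by
      rw [← hk, ← inv_zpow]
      exact (hconj.zpow_right k).eq
    have h2 : (x * x) * (x * x) = 1 := by
      rw [← mul_assoc x, mul_left_inj, eq_inv_iff_mul_eq_one] at h1
      simpa [mul_assoc] using h1
    refine (hinv _ h2).resolve_left fun h => ?_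
    obtain rfl | rfl := hinv x h
    · exact hx (one_mem _)
    · exact hx (Subgroup.npow_mem_zpowers g 3)
  have hinj := QuaternionGroup.liftOfRelations_injective (n := 3) hg hsq hconj hx
  exact ⟨(MulEquiv.ofBijective _ ((Nat.bijective_iff_injective_and_card _).2
    ⟨hinj, by rw [Nat.card_eq_fintype_card, QuaternionGroup.card, hcard]⟩)).symm⟩

theorem Matrix.SpecialLinearGroup.eq_one_or_eq_neg_one_of_mul_self_eq_one {K : Type*} [Field K]
    (h2 : (2 : K) ≠ 0) {A : Matrix.SpecialLinearGroup (Fin 2) K} (hA : A * A = 1) :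
    A = 1 ∨ A = -1 := by
  have hdet := A.det_coe
  rw [Matrix.det_fin_two] at hdet
  have hentry (i j : Fin 2) := congrArg (fun B => B i j) (congrArg Subtype.val hA)
  have h00 := hentry 0 0
  have h01 := hentry 0 1
  have h10 := hentry 1 0
  simp [Matrix.mul_apply, Fin.sum_univ_two] at h00 h01 h10
  have htr : A 0 0 + A 1 1 ≠ 0 := by
    intro h
    apply h2
    linear_combination A 0 0 * h - hdet - h00
  have hb : A 0 1 = 0 := (mul_eq_zero.1 (by linear_combination h01)).resolve_right htr
  have hc : A 1 0 = 0 := (mul_eq_zero.1 (by linear_combination h10)).resolve_right htr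
  rw [hb] at h00 hdet
  obtain ha | ha := mul_self_eq_one_iff.1 (by linear_combination h00 : A 0 0 * A 0 0 = 1)
  · have hd : A 1 1 = 1 := by rw [ha] at hdet; linear_combination hdet
    left
    ext i j
    fin_cases i <;> fin_cases j <;> simp [*]
  · have hd : A 1 1 = -1 := by rw [ha] at hdet; linear_combination -hdet
    right
    ext i j
    fin_cases i <;> fin_cases j <;> simp [*]

theorem not_nonempty_mulEquiv_dihedralGroup_six {G : Type*} [Group G] {z : G}
    (hinv : ∀ h : G, h * h = 1 → h = 1 ∨ h = z) : ¬ Nonempty (G ≃* DihedralGroup 6) := by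
  rintro ⟨e⟩
  have h (i : ZMod 6) : e.symm (.sr i) = z := by
    refine (hinv _ (by rw [← map_mul, DihedralGroup.sr_mul_self, map_one])).resolve_left ?_
    rw [map_eq_one_iff e.symm e.symm.injective]
    exact nofun
  have h01 := e.symm.injective ((h 0).trans (h 1).symm)
  exact absurd h01 (by decide)

theorem stmt_11 (φ : Matrix.SpecialLinearGroup (Fin 2) (ZMod 7))
    (hφ : (φ : Matrix (Fin 2) (Fin 2) (ZMod 7)) = !![0, -1; 1, -1])
    (H : Subgroup (Matrix.SpecialLinearGroup (Fin 2) (ZMod 7)))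
    (hcard : Nat.card H = 12) (hneg : (-1 : Matrix.SpecialLinearGroup (Fin 2) (ZMod 7)) ∈ H)
    (hφH : φ ∈ H) (hnab : ¬ ∀ a b : H, a * b = b * a) :
    Nonempty (H ≃* QuaternionGroup 3) ∧ ¬ Nonempty (H ≃* DihedralGroup 6) := by
  have hinv (h : H) (hh : h * h = 1) : h = 1 ∨ h = ⟨-1, hneg⟩ := by
    have : Fact (Nat.Prime 7) := ⟨by norm_num⟩
    exact (Matrix.SpecialLinearGroup.eq_one_or_eq_neg_one_of_mul_self_eq_one (K := ZMod 7)
      (by decide +revert) (congrArg Subtype.val hh)).imp Subtype.ext Subtype.ext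
  refine ⟨?_, not_nonempty_mulEquiv_dihedralGroup_six hinv⟩
  let g : H := ⟨-1, hneg⟩ * ⟨φ, hφH⟩
  have hφ' : φ = ⟨!![0, -1; 1, -1], by decide⟩ := Subtype.ext hφ
  have hg3 : g ^ 3 = ⟨-1, hneg⟩ := by
    apply Subtype.ext
    change (-1 * φ) ^ 3 = -1
    rw [hφ']
    decide
  have hg2 : g ^ 2 ≠ 1 := by
    intro h
    have h' : (-1 * φ) ^ 2 = 1 := congrArg Subtype.val h
    rw [hφ'] at h'
    revert h'
    decide
  have hone : (⟨-1, hneg⟩ : H) ≠ 1 := by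
    rw [Ne, Subtype.ext_iff]
    change (-1 : Matrix.SpecialLinearGroup (Fin 2) (ZMod 7)) ≠ 1
    decide
  have hg : orderOf g = 6 := by
    refine orderOf_eq_of_pow_and_pow_div_prime (by norm_num) ?_ fun p hp hdvd => ?_
    · rw [show 6 = 3 * 2 from rfl, pow_mul, hg3]
      simp [Subtype.ext_iff]
    · obtain rfl | rfl : p = 2 ∨ p = 3 :=
        ((Nat.Prime.dvd_mul hp).1 (show p ∣ 2 * 3 from hdvd)).imp
          (Nat.prime_dvd_prime_iff_eq hp Nat.prime_two).1
          (Nat.prime_dvd_prime_iff_eq hp Nat.prime_three).1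
      · rw [show 6 / 2 = 3 from rfl, hg3]
        exact hone
      · exact hg2
  exact nonempty_mulEquiv_quaternionGroup_three hcard hnab hg (by simpa only [hg3] using hinv)
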